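/- Let A be a connected reduced order with universal grading (Γ, (A_γ)_{γ∈Γ}) and let G be a finite abelian group. For γ ∈ Γ and g ∈ G, let (A[G])_{(γ,g)} = A_γ·g be the additive subgroup {x·g : x ∈ A_γ} of the group ring A[G]. Then (Γ × G, ((A[G])_{(γ,g)})_{(γ,g)}) is a universal grading of A[G]. Moreover, identifying μ(A[G]) with μ(A) × G via the isomorphism (ζ,g) ↦ ζ·g, the degree map of A[G] with respect to this universal grading equals d_A × id_G, where d_A is the degree map of A. -/

import Mathlib

/-- A commutative ring is connected if it is non-zero and `0`, `1` are its only idempotents. -/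
def IsConnectedRing (R : Type*) [CommRing R] : Prop :=
  Nontrivial R ∧ ∀ e : R, IsIdempotentElem e → e = 0 ∨ e = 1

/-- A grading of a commutative ring `R` by a (multiplicatively written) abelian group `Δ`:
a `Δ`-indexed internal direct sum decomposition of `R` into additive subgroups such that
`R_γ · R_δ ⊆ R_{γδ}`. -/
structure Grading (R : Type u) [CommRing R] (Δ : Type v) [CommGroup Δ] where
  comp : Δ → AddSubgroup R
  mul_mem : ∀ ⦃γ δ : Δ⦄ ⦃x y : R⦄, x ∈ comp γ → y ∈ comp δ → x * y ∈ comp (γ * δ)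
  isInternal : letI := Classical.decEq Δ; DirectSum.IsInternal comp

/-- A grading is universal if every grading of `R` is obtained from it by pushforward
(`S_ε = Σ_{δ ∈ f⁻¹(ε)} R_δ`) along a unique group homomorphism. -/
def Grading.IsUniversal {R : Type u} [CommRing R] {Δ : Type v} [CommGroup Δ]
    (g : Grading R Δ) : Prop :=
  ∀ (E : Type v) (_ : CommGroup E) (s : Grading R E),
    ∃! f : Δ →* E, ∀ ε : E, s.comp ε = ⨆ δ ∈ f ⁻¹' {ε}, g.comp δ

/-!
A reduced order `R` carries the positive definite form `∑ σ, σ x * conj (σ y)` over its complex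
embeddings. A character of the grading group of `R` twists each embedding into another one, so
distinct homogeneous components are orthogonal. As only finitely many elements have bounded norm,
repeatedly replacing an element by two shorter summands shows that any two gradings have a common
refinement, i.e. that their projections commute. For `R = A[G]`, comparing an arbitrary grading
with the one by `G` shows that every `A·g` is graded. All embeddings take absolute value one
at `g`, so its components `a_ε·g` satisfy `∑ ε, |σ a_ε|² ≤ 1`; Kronecker's theorem and connectedness
make each `a_ε` zero or a root of unity, hence exactly one of them is non-zero. A grading of `A[G]`
by `E` therefore amounts to a grading of `A` by `E` together with a homomorphism `G →* E`.
-/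

section Characters

theorem exists_injective_ratAddCircle_toCircle :
    ∃ j : AddCircle (1 : ℚ) →+ Additive Circle, Function.Injective j := by
  let e : ℚ →+ Additive Circle :=
    Circle.expHom.comp ((AddMonoidHom.mulLeft (2 * Real.pi)).comp (Rat.castHom ℝ : ℚ →+ ℝ))
  have he (q : ℚ) : e q = 0 ↔ q ∈ AddSubgroup.zmultiples (1 : ℚ) := by
    change Circle.exp (2 * Real.pi * (q : ℝ)) = 1 ↔ _
    rw [Circle.exp_eq_one, AddSubgroup.mem_zmultiples_iff]
    refine exists_congr fun n => ?_
    rw [mul_comm, mul_left_inj' Real.two_pi_pos.ne', zsmul_one, eq_comm]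
    norm_cast
  refine ⟨QuotientAddGroup.lift _ e fun q hq => (he q).2 hq, ?_⟩
  rw [injective_iff_map_eq_zero]
  rintro ⟨q⟩ hq
  exact (QuotientAddGroup.eq_zero_iff q).2 ((he q).1 hq)

theorem exists_circleCharacter_ne_one {E : Type*} [CommGroup E] {ε : E} (hε : ε ≠ 1) :
    ∃ χ : E →* Circle, χ ε ≠ 1 := by
  obtain ⟨j, hj⟩ := exists_injective_ratAddCircle_toCircle
  obtain ⟨c, hc⟩ := CharacterModule.exists_character_apply_ne_zero_of_ne_zero
    (A := Additive E) (a := Additive.ofMul ε) (by simpa using hε)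
  exact ⟨(j.comp c).toMultiplicativeRight, fun h => hc (hj (by rw [map_zero]; exact h))⟩

end Characters

section ComplexEmbeddings

theorem exists_injective_ringHom_complex (D : Type*) [CommRing D] [IsDomain D] [CharZero D]
    [Algebra.IsIntegral ℤ D] : ∃ σ : D →+* ℂ, Function.Injective σ := by
  let l : D →ₐ[ℤ] ℂ := IsAlgClosed.lift
  refine ⟨l, (RingHom.injective_iff_ker_eq_bot (l : D →+* ℂ)).2 ?_⟩
  refine Ideal.eq_bot_of_comap_eq_bot (R := ℤ) (eq_bot_iff.2 fun n hn => ?_)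
  have hn : l (algebraMap ℤ D n) = 0 := hn
  simpa using hn

section TorsionFree

variable {R : Type*} [CommRing R] [Module.IsTorsionFree ℤ R]

theorem charZero_quotient_of_mem_minimalPrimes {P : Ideal R} (hP : P ∈ minimalPrimes R) :
    CharZero (R ⧸ P) := by
  refine charZero_of_inj_zero fun n hn => ?_
  by_contra hn0
  have hnP : (n : R) ∈ P := Ideal.Quotient.eq_zero_iff_mem.1 (by simpa using hn)
  refine notMem_nonZeroDivisors_of_mem_mem_minimalPrimes hnP hP
    (mem_nonZeroDivisors_iff_right.2 fun x hx => ?_)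
  have hx : (n : ℤ) • x = 0 := by simpa [mul_comm] using hx
  exact (smul_eq_zero.1 hx).resolve_left (by exact_mod_cast hn0)

theorem exists_ringHom_complex_ne_zero [IsReduced R] [Algebra.IsIntegral ℤ R] {x : R}
    (hx : x ≠ 0) : ∃ σ : R →+* ℂ, σ x ≠ 0 := by
  obtain ⟨P, hP, hxP⟩ : ∃ P ∈ minimalPrimes R, x ∉ P := by
    by_contra! h
    have hx0 : x ∈ (⊥ : Ideal R).radical := by
      rw [← Ideal.sInf_minimalPrimes]
      exact Ideal.mem_sInf.2 fun {P} hP => h P hP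
    exact hx (by simpa [← nilradical_eq_zero R, nilradical] using hx0)
  have : P.IsPrime := hP.1.1
  have := charZero_quotient_of_mem_minimalPrimes hP
  have := Algebra.IsIntegral.of_surjective (Ideal.Quotient.mk P).toIntAlgHom
    Ideal.Quotient.mk_surjective
  obtain ⟨σ, hσ⟩ := exists_injective_ringHom_complex (R ⧸ P)
  refine ⟨σ.comp (Ideal.Quotient.mk P), fun h => hxP (Ideal.Quotient.eq_zero_iff_mem.1 (hσ ?_))⟩
  simpa using h

end TorsionFree

section ModuleFinite

variable {R : Type*} [CommRing R] [Module.Finite ℤ R]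

instance finite_ringHom_complex : Finite (R →+* ℂ) :=
  .of_injective (RingHom.toIntAlgHom : (R →+* ℂ) → (R →ₐ[ℤ] ℂ)) fun _ _ h =>
    RingHom.ext fun x => DFunLike.congr_fun h x

theorem exists_numberField_range_le (σ : R →+* ℂ) :
    ∃ K : IntermediateField ℚ ℂ, NumberField K ∧ ∀ x, σ x ∈ K := by
  obtain ⟨t, ht⟩ := (Module.Finite.fg_top : (⊤ : Submodule ℤ R).FG)
  have : FiniteDimensional ℚ (IntermediateField.adjoin ℚ (σ '' t)) :=
    IntermediateField.finiteDimensional_adjoin <| by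
      rintro _ ⟨x, -, rfl⟩
      exact ((Algebra.IsIntegral.isIntegral (R := ℤ) x).map σ.toIntAlgHom).tower_top
  refine ⟨.adjoin ℚ (σ '' t), ⟨⟩, fun x => ?_⟩
  have hx : x ∈ Submodule.span ℤ (t : Set R) := ht ▸ Submodule.mem_top
  induction hx using Submodule.span_induction with
  | mem x h => exact IntermediateField.subset_adjoin _ _ ⟨x, h, rfl⟩
  | zero => simp
  | add x y _ _ hx hy => simpa using add_mem hx hy
  | smul n x _ hx => simpa using zsmul_mem hx n

theorem finite_image_setOf_norm_le (σ : R →+* ℂ) (B : ℝ) :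
    (σ '' {x | ∀ τ : R →+* ℂ, ‖τ x‖ ≤ B}).Finite := by
  obtain ⟨K, _, hσ⟩ := exists_numberField_range_le σ
  let ρ : R →+* K := σ.codRestrict K.toSubring hσ
  refine ((NumberField.Embeddings.finite_of_norm_le K ℂ B).image (algebraMap K ℂ)).subset ?_
  rintro _ ⟨x, hx, rfl⟩
  exact ⟨ρ x, ⟨(Algebra.IsIntegral.isIntegral x).map ρ.toIntAlgHom, fun τ => hx (τ.comp ρ)⟩, rfl⟩

theorem finite_setOf_norm_le [Module.IsTorsionFree ℤ R] [IsReduced R] (B : ℝ) :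
    {x : R | ∀ σ : R →+* ℂ, ‖σ x‖ ≤ B}.Finite := by
  refine Set.Finite.of_finite_image (f := fun x (σ : R →+* ℂ) => σ x) ?_ fun x _ y _ h => ?_
  · refine (Set.Finite.pi' fun σ => finite_image_setOf_norm_le σ B).subset ?_
    rintro _ ⟨x, hx, rfl⟩ σ
    exact ⟨x, hx, rfl⟩
  · by_contra hxy
    obtain ⟨σ, hσ⟩ := exists_ringHom_complex_ne_zero (sub_ne_zero.2 hxy)
    exact hσ (by rw [map_sub, sub_eq_zero]; exact congrFun h σ)

end ModuleFinite

namespace IsConnectedRing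

variable {R : Type*} [CommRing R] [IsReduced R]

theorem eq_zero_or_isOfFinOrder_of_finite_range_pow (hR : IsConnectedRing R) {a : R}
    (ha : (Set.range (a ^ · : ℕ → R)).Finite) : a = 0 ∨ IsOfFinOrder a := by
  obtain ⟨m, n, hmn, hpow⟩ := ha.exists_lt_map_eq_of_forall_mem Set.mem_range_self
  obtain ⟨k, rfl⟩ := Nat.exists_eq_add_of_lt hmn
  have hidem : IsIdempotentElem (a ^ (k + 1)) := by
    refine sub_eq_zero.1 (IsReduced.eq_zero _ ⟨m + 1, ?_⟩)
    have hzero : a ^ m * (a ^ (k + 1) - 1) = 0 := by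
      rw [mul_sub, ← pow_add, mul_one, sub_eq_zero]
      exact hpow.symm
    have hdvd : a ^ m * (a ^ (k + 1) - 1) ∣
        (a ^ (k + 1) * a ^ (k + 1) - a ^ (k + 1)) ^ (m + 1) := by
      rw [← mul_sub_one, mul_pow, ← pow_mul]
      exact mul_dvd_mul (pow_dvd_pow _ (by nlinarith)) (dvd_pow_self _ m.succ_ne_zero)
    rwa [hzero, zero_dvd_iff] at hdvd
  rcases hR.2 _ hidem with h | h
  · exact .inl (eq_zero_of_pow_eq_zero h)
  · exact .inr (isOfFinOrder_iff_pow_eq_one.2 ⟨k + 1, k.succ_pos, h⟩)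

/-- Kronecker's theorem for connected reduced orders. -/
theorem eq_zero_or_isOfFinOrder_of_norm_le_one [Module.Finite ℤ R] [Module.IsTorsionFree ℤ R]
    (hR : IsConnectedRing R) {a : R} (ha : ∀ σ : R →+* ℂ, ‖σ a‖ ≤ 1) :
    a = 0 ∨ IsOfFinOrder a := by
  refine hR.eq_zero_or_isOfFinOrder_of_finite_range_pow ((finite_setOf_norm_le 1).subset ?_)
  rintro _ ⟨n, rfl⟩ σ
  simpa using pow_le_one₀ (norm_nonneg _) (ha σ)

end IsConnectedRing

end ComplexEmbeddings

section InternalDirectSum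

variable {ι M : Type*} [AddCommGroup M] {c : ι → AddSubgroup M}

theorem iSupIndep_of_forall_exists_addMonoidHom {N : Type*} [AddCommGroup N]
    (h : ∀ i, ∃ p : M →+ N, (∀ x ∈ c i, p x = 0 → x = 0) ∧ ∀ j ≠ i, c j ≤ p.ker) :
    iSupIndep c := by
  intro i
  obtain ⟨p, hi, hj⟩ := h i
  exact .mono_right (iSup₂_le hj) (AddSubgroup.disjoint_def.2 fun hx hx' => hi _ hx hx')

theorem isInternal_of_iSupIndep_of_iSup_eq_top (hindep : iSupIndep c) (htop : ⨆ i, c i = ⊤) :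
    letI := Classical.decEq ι; DirectSum.IsInternal c := by
  classical
  refine ⟨hindep.dfinsuppSumAddHom_injective, fun x => ?_⟩
  have hx : x ∈ ⨆ i, c i := htop ▸ AddSubgroup.mem_top x
  induction hx using AddSubgroup.iSup_induction' with
  | hp i x hx => exact ⟨DirectSum.of (fun i => c i) i ⟨x, hx⟩, by simp⟩
  | h1 => exact ⟨0, map_zero _⟩
  | hadd x y _ _ hx hy =>
    obtain ⟨a, rfl⟩ := hx
    obtain ⟨b, rfl⟩ := hy
    exact ⟨a + b, map_add _ _ _⟩

end InternalDirectSum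

namespace Grading

section Decomposition

variable {R E F : Type*} [CommRing R] [CommGroup E] [CommGroup F] (s : Grading R E)
  {ε δ : E} {x : R}

theorem iSupIndep_comp : iSupIndep s.comp :=
  letI := Classical.decEq E
  s.isInternal.addSubgroup_iSupIndep

theorem iSup_comp : ⨆ ε, s.comp ε = ⊤ :=
  (AddSubgroup.eq_top_iff' _).2 fun x => by
    classical
    obtain ⟨a, rfl⟩ := s.isInternal.surjective x
    induction a using DirectSum.induction_on with
    | zero => exact zero_mem _
    | of ε a => exact AddSubgroup.mem_iSup_of_mem ε (by simp)
    | add a b ha hb => rw [map_add]; exact add_mem ha hb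

@[elab_as_elim]
theorem induction_homogeneous {p : R → Prop} (x : R)
    (homogeneous : ∀ ε, ∀ x ∈ s.comp ε, p x) (add : ∀ x y, p x → p y → p (x + y)) : p x :=
  AddSubgroup.iSup_induction s.comp (C := p) (s.iSup_comp ▸ AddSubgroup.mem_top x) homogeneous
    (homogeneous 1 0 (zero_mem _)) add

/-- The additive map out of `R` given by the family `f` on the homogeneous components. -/
noncomputable def lift {M : Type*} [AddCommGroup M] (f : E → R →+ M) : R →+ M :=
  letI := Classical.decEq E
  letI := s.isInternal.chooseDecomposition
  (DirectSum.toAddMonoid fun ε => (f ε).comp (s.comp ε).subtype).comp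
    (DirectSum.decomposeAddEquiv s.comp).toAddMonoidHom

theorem lift_of_mem {M : Type*} [AddCommGroup M] (f : E → R →+ M) (hx : x ∈ s.comp ε) :
    s.lift f x = f ε x := by
  let := Classical.decEq E
  let := s.isInternal.chooseDecomposition
  simp [lift, DirectSum.decompose_of_mem s.comp hx]

/-- The projection of `R` onto its component of degree `ε`, as an endomorphism of `R`. -/
noncomputable def proj (ε : E) : R →+ R :=
  letI := Classical.decEq E
  letI := s.isInternal.chooseDecomposition
  (s.comp ε).subtype.comp <| (DFinsupp.evalAddMonoidHom ε).comp
    (DirectSum.decomposeAddEquiv s.comp).toAddMonoidHom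

theorem proj_mem (ε : E) (x : R) : s.proj ε x ∈ s.comp ε :=
  Subtype.property _

theorem proj_of_mem (hx : x ∈ s.comp ε) : s.proj ε x = x :=
  letI := Classical.decEq E
  letI := s.isInternal.chooseDecomposition
  DirectSum.decompose_of_mem_same s.comp hx

theorem proj_of_mem_ne (hx : x ∈ s.comp δ) (h : δ ≠ ε) : s.proj ε x = 0 :=
  letI := Classical.decEq E
  letI := s.isInternal.chooseDecomposition
  DirectSum.decompose_of_mem_ne s.comp hx h

theorem degree_unique (hε : x ∈ s.comp ε) (hδ : x ∈ s.comp δ) (hx : x ≠ 0) : ε = δ := by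
  by_contra h
  exact hx ((s.proj_of_mem hε).symm.trans (s.proj_of_mem_ne hδ (Ne.symm h)))

theorem mem_of_forall_proj_mem {H : AddSubgroup R} (h : ∀ ε, s.proj ε x ∈ H) : x ∈ H := by
  classical
  let := s.isInternal.chooseDecomposition
  rw [← DirectSum.sum_support_decompose s.comp x]
  exact sum_mem fun ε _ => h ε

theorem exists_proj_ne_zero (hx : x ≠ 0) : ∃ ε, s.proj ε x ≠ 0 := by
  by_contra! h
  exact hx (AddSubgroup.mem_bot.1 (s.mem_of_forall_proj_mem (H := ⊥) h))

theorem proj_mul_of_mem (hx : x ∈ s.comp δ) (ε : E) (y : R) :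
    s.proj (δ * ε) (x * y) = x * s.proj ε y := by
  induction y using s.induction_homogeneous with
  | homogeneous γ y hy =>
    by_cases h : γ = ε
    · subst h
      rw [s.proj_of_mem hy, s.proj_of_mem (s.mul_mem hx hy)]
    · rw [s.proj_of_mem_ne hy h, s.proj_of_mem_ne (s.mul_mem hx hy) (by simpa using h), mul_zero]
  | add y z hy hz => rw [mul_add, map_add, map_add, hy, hz, mul_add]

theorem one_mem : (1 : R) ∈ s.comp 1 := by
  have hproj (x : R) : x * s.proj 1 1 = x := by
    induction x using s.induction_homogeneous with
    | homogeneous γ x hx => rw [← s.proj_mul_of_mem hx, mul_one, mul_one, s.proj_of_mem hx]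
    | add x y hx hy => rw [add_mul, hx, hy]
  rw [← hproj 1, one_mul]
  exact s.proj_mem 1 1

theorem eq_iSup_preimage_iff (t : Grading R F) (f : E →* F) :
    (∀ φ, t.comp φ = ⨆ ε ∈ f ⁻¹' {φ}, s.comp ε) ↔ ∀ ε, s.comp ε ≤ t.comp (f ε) := by
  refine ⟨fun h ε => h (f ε) ▸ le_iSup₂_of_le ε rfl le_rfl, fun h φ => le_antisymm ?_ ?_⟩
  · intro x hx
    have hproj (y : R) : t.proj φ y ∈ ⨆ ε ∈ f ⁻¹' {φ}, s.comp ε := by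
      induction y using s.induction_homogeneous with
      | homogeneous ε y hy =>
        by_cases hφ : f ε = φ
        · rw [t.proj_of_mem (hφ ▸ h ε hy)]
          exact AddSubgroup.mem_iSup_of_mem ε (AddSubgroup.mem_iSup_of_mem hφ hy)
        · rw [t.proj_of_mem_ne (h ε hy) hφ]
          exact zero_mem _
      | add y z hy hz => rw [map_add]; exact add_mem hy hz
    exact t.proj_of_mem hx ▸ hproj x
  · exact iSup₂_le fun ε hε => (h ε).trans_eq (congrArg t.comp hε)

theorem isUniversal_iff {R : Type u} [CommRing R] {Δ : Type v} [CommGroup Δ] {s : Grading R Δ} :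
    s.IsUniversal ↔ ∀ (E : Type v) (_ : CommGroup E) (t : Grading R E),
      ∃! f : Δ →* E, ∀ δ, s.comp δ ≤ t.comp (f δ) := by
  simp only [IsUniversal, eq_iSup_preimage_iff]

end Decomposition

section Constructions

variable {R E F : Type*} [CommRing R] [CommGroup E] [CommGroup F]

/-- The grading by the one-element group. -/
def ofUnit (R : Type*) [CommRing R] : Grading R Unit where
  comp _ := ⊤
  mul_mem _ _ _ _ _ _ := AddSubgroup.mem_top _
  isInternal := isInternal_of_iSupIndep_of_iSup_eq_top (iSupIndep_subsingleton _) (by simp)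

/-- The degrees whose components are non-zero. -/
def support (s : Grading R E) : Set E :=
  {ε | s.comp ε ≠ ⊥}

/-- A grading by `E` whose support lies in the image of an injective homomorphism `ι : F →* E`,
regarded as a grading by `F`. -/
def reindex (s : Grading R E) (ι : F →* E) (hι : Function.Injective ι)
    (hs : s.support ⊆ Set.range ι) : Grading R F where
  comp φ := s.comp (ι φ)
  mul_mem γ δ x y hx hy := map_mul ι γ δ ▸ s.mul_mem hx hy
  isInternal := by
    refine isInternal_of_iSupIndep_of_iSup_eq_top (s.iSupIndep_comp.comp hι) ?_
    refine eq_top_iff.2 (s.iSup_comp ▸ iSup_le fun ε => ?_)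
    by_cases hε : s.comp ε = ⊥
    · exact hε ▸ bot_le
    · obtain ⟨φ, rfl⟩ := hs hε
      exact le_iSup (fun φ => s.comp (ι φ)) φ

/-- The restriction of a grading of `R` along an embedding `f` whose image is stable under taking
homogeneous components. -/
def comap {A : Type*} [CommRing A] (s : Grading R E) (f : A →+* R) (hf : Function.Injective f)
    (hs : ∀ ε a, s.proj ε (f a) ∈ f.range) : Grading A E where
  comp ε := (s.comp ε).comap f.toAddMonoidHom
  mul_mem γ δ x y hx hy := by simpa using s.mul_mem hx hy
  isInternal := by
    refine isInternal_of_iSupIndep_of_iSup_eq_top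
      (iSupIndep_of_forall_exists_addMonoidHom (N := R) fun ε => ?_)
      ((AddSubgroup.eq_top_iff' _).2 fun a => ?_)
    · refine ⟨(s.proj ε).comp f.toAddMonoidHom, fun x hx h => hf ?_, fun δ hδ x hx => ?_⟩
      · exact (s.proj_of_mem hx).symm.trans (h.trans (map_zero f).symm)
      · exact s.proj_of_mem_ne hx hδ
    · have ha : f a ∈ (⨆ ε, (s.comp ε).comap f.toAddMonoidHom).map f.toAddMonoidHom :=
        s.mem_of_forall_proj_mem fun ε => by
          obtain ⟨b, hb⟩ := hs ε a
          have hb' : f b ∈ s.comp ε := hb ▸ s.proj_mem ε (f a)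
          exact ⟨b, le_iSup (fun ε => (s.comp ε).comap f.toAddMonoidHom) ε hb', hb⟩
      obtain ⟨b, hb, hba⟩ := ha
      exact hf hba ▸ hb

open MonoidAlgebra in
/-- The grading of the group ring `R[G]` by `E × G` in which `x · g` has degree `(ε, g)` whenever
`x` has degree `ε`. -/
noncomputable def groupRing (s : Grading R E) (G : Type*) [CommGroup G] :
    Grading (MonoidAlgebra R G) (E × G) where
  comp x := (s.comp x.1).map (singleAddHom x.2)
  mul_mem := by
    rintro ⟨γ, g⟩ ⟨δ, h⟩ _ _ ⟨a, ha, rfl⟩ ⟨b, hb, rfl⟩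
    exact ⟨a * b, s.mul_mem ha hb, by simp [single_mul_single]⟩
  isInternal := by
    refine isInternal_of_iSupIndep_of_iSup_eq_top
      (iSupIndep_of_forall_exists_addMonoidHom (N := R) ?_)
      ((AddSubgroup.eq_top_iff' _).2 fun x => ?_)
    · rintro ⟨γ, g⟩
      refine ⟨.mk' (fun x => s.proj γ (x.coeff g)) (by simp), ?_, ?_⟩
      · rintro _ ⟨a, ha, rfl⟩ h
        have ha0 : a = 0 := by simpa [s.proj_of_mem ha] using h
        simp [ha0]
      · rintro ⟨δ, h⟩ hne _ ⟨a, ha, rfl⟩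
        by_cases hg : h = g
        · subst hg
          have hδ : δ ≠ γ := by simpa using hne
          simp [s.proj_of_mem_ne ha hδ]
        · simp [hg]
    · induction x using MonoidAlgebra.induction_linear with
      | zero => exact zero_mem _
      | add x y hx hy => exact add_mem hx hy
      | single g a =>
        induction a using s.induction_homogeneous with
        | homogeneous γ a ha => exact AddSubgroup.mem_iSup_of_mem (γ, g) ⟨a, ha, rfl⟩
        | add a b ha hb => rw [single_add]; exact add_mem ha hb

end Constructions

end Grading

/-- The vector of values of an element at the complex homomorphisms in `O`. -/
noncomputable def minkowskiMap {R : Type*} [CommRing R] (O : Finset (R →+* ℂ)) :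
    R →+ EuclideanSpace ℂ O :=
  .mk' (fun x => WithLp.toLp 2 fun σ => (σ : R →+* ℂ) x) fun x y => by ext; simp

section MinkowskiMap

variable {R : Type*} [CommRing R] (O : Finset (R →+* ℂ))

theorem inner_minkowskiMap (x y : R) :
    inner ℂ (minkowskiMap O x) (minkowskiMap O y) = ∑ σ ∈ O, σ y * starRingEnd ℂ (σ x) := by
  rw [← Finset.sum_attach]
  simp [minkowskiMap, PiLp.inner_apply]

theorem norm_sq_minkowskiMap (x : R) : ‖minkowskiMap O x‖ ^ 2 = ∑ σ ∈ O, ‖σ x‖ ^ 2 := by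
  rw [← Finset.sum_attach]
  simp [minkowskiMap, EuclideanSpace.norm_sq_eq]

end MinkowskiMap

namespace Grading

section Twist

variable {R E : Type*} [CommRing R] [CommGroup E] (s : Grading R E)

/-- The homomorphism `σ` multiplied by `χ ε` on the component of degree `ε`, for a character `χ` of
the grading group. -/
noncomputable def twist (χ : E →* Circle) (σ : R →+* ℂ) : R →+* ℂ :=
  let l : R →+ ℂ := s.lift fun ε => (AddMonoidHom.mulLeft (χ ε : ℂ)).comp σ.toAddMonoidHom
  have hl {ε x} (hx : x ∈ s.comp ε) : l x = χ ε * σ x := s.lift_of_mem _ hx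
  { l with
    map_one' := show l 1 = 1 by rw [hl s.one_mem]; simp
    map_mul' x y := show l (x * y) = l x * l y by
      induction x using s.induction_homogeneous with
      | homogeneous γ x hx =>
        induction y using s.induction_homogeneous with
        | homogeneous δ y hy =>
          rw [hl hx, hl hy, hl (s.mul_mem hx hy), map_mul, map_mul, Circle.coe_mul]
          ring
        | add y z hy hz => rw [mul_add, map_add, map_add, hy, hz, mul_add]
      | add x z hx hz => rw [add_mul, map_add, map_add, hx, hz, add_mul] }

theorem twist_of_mem (χ : E →* Circle) (σ : R →+* ℂ) {ε : E} {x : R} (hx : x ∈ s.comp ε) :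
    s.twist χ σ x = χ ε * σ x :=
  s.lift_of_mem _ hx

theorem twist_twist (χ ψ : E →* Circle) (σ : R →+* ℂ) :
    s.twist ψ (s.twist χ σ) = s.twist (ψ * χ) σ := by
  ext x
  induction x using s.induction_homogeneous with
  | homogeneous γ x hx =>
    rw [s.twist_of_mem _ _ hx, s.twist_of_mem _ _ hx, s.twist_of_mem _ _ hx, MonoidHom.mul_apply,
      Circle.coe_mul, mul_assoc]
  | add x y hx hy => rw [map_add, map_add, hx, hy]

theorem twist_one (σ : R →+* ℂ) : s.twist 1 σ = σ := by
  ext x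
  induction x using s.induction_homogeneous with
  | homogeneous γ x hx => simp [s.twist_of_mem _ _ hx]
  | add x y hx hy => rw [map_add, map_add, hx, hy]

/-- A finite set of complex homomorphisms closed under all twists by characters of the grading
group. -/
def TwistStable (O : Finset (R →+* ℂ)) : Prop :=
  ∀ σ ∈ O, ∀ χ, s.twist χ σ ∈ O

/-- The orbit of `σ` under twisting by the characters of the grading group. -/
noncomputable def twistOrbit [Finite (R →+* ℂ)] (σ : R →+* ℂ) : Finset (R →+* ℂ) :=
  (Set.toFinite (Set.range fun χ => s.twist χ σ)).toFinset

theorem mem_twistOrbit [Finite (R →+* ℂ)] {σ τ : R →+* ℂ} :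
    τ ∈ s.twistOrbit σ ↔ ∃ χ, s.twist χ σ = τ := by
  simp [twistOrbit]

theorem twistStable_twistOrbit [Finite (R →+* ℂ)] (σ : R →+* ℂ) :
    s.TwistStable (s.twistOrbit σ) := by
  intro τ hτ χ
  obtain ⟨ψ, rfl⟩ := s.mem_twistOrbit.1 hτ
  exact s.mem_twistOrbit.2 ⟨χ * ψ, (s.twist_twist ψ χ σ).symm⟩

theorem norm_sq_minkowskiMap_twistOrbit [Finite (R →+* ℂ)] (σ : R →+* ℂ) {ε : E} {x : R}
    (hx : x ∈ s.comp ε) :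
    ‖minkowskiMap (s.twistOrbit σ) x‖ ^ 2 = (s.twistOrbit σ).card * ‖σ x‖ ^ 2 := by
  rw [norm_sq_minkowskiMap, ← nsmul_eq_mul]
  refine Finset.sum_eq_card_nsmul fun τ hτ => ?_
  obtain ⟨χ, rfl⟩ := s.mem_twistOrbit.1 hτ
  rw [s.twist_of_mem χ σ hx, norm_mul, Circle.norm_coe, one_mul]

end Twist

section Orthogonality

variable {R E : Type*} [CommRing R] [CommGroup E] {s : Grading R E} {O : Finset (R →+* ℂ)}

theorem TwistStable.inner_eq_zero (hO : s.TwistStable O) {ε δ : E} (hne : ε ≠ δ) {x y : R}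
    (hx : x ∈ s.comp ε) (hy : y ∈ s.comp δ) :
    inner ℂ (minkowskiMap O x) (minkowskiMap O y) = 0 := by
  obtain ⟨χ, hχ⟩ := exists_circleCharacter_ne_one (div_ne_one.2 hne.symm)
  set S := inner ℂ (minkowskiMap O x) (minkowskiMap O y) with hS
  rw [inner_minkowskiMap] at hS
  have htwist : χ (δ / ε) * S = S := by
    calc χ (δ / ε) * S
        = ∑ σ ∈ O, s.twist χ σ y * starRingEnd ℂ (s.twist χ σ x) := by
          rw [hS, Finset.mul_sum]
          refine Finset.sum_congr rfl fun σ _ => ?_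
          rw [s.twist_of_mem χ σ hx, s.twist_of_mem χ σ hy, map_mul, map_div, div_eq_mul_inv,
            Circle.coe_mul, Circle.coe_inv_eq_conj]
          ring
      _ = S := by
          rw [hS]
          exact Finset.sum_nbij' (s.twist χ) (s.twist χ⁻¹) (fun σ hσ => hO σ hσ χ)
            (fun σ hσ => hO σ hσ χ⁻¹) (fun σ _ => by simp [twist_twist, twist_one])
            (fun σ _ => by simp [twist_twist, twist_one]) fun _ _ => rfl
  by_contra h
  exact hχ (Circle.coe_injective (mul_right_cancel₀ h (htwist.trans (one_mul S).symm)))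

theorem TwistStable.inner_sub_proj_eq_zero (hO : s.TwistStable O) {ε : E} {x : R}
    (hx : x ∈ s.comp ε) (y : R) :
    inner ℂ (minkowskiMap O x) (minkowskiMap O (y - s.proj ε y)) = 0 := by
  induction y using s.induction_homogeneous with
  | homogeneous δ y hy =>
    by_cases h : δ = ε
    · subst h
      rw [s.proj_of_mem hy, sub_self, map_zero, inner_zero_right]
    · rw [s.proj_of_mem_ne hy h, sub_zero, hO.inner_eq_zero (Ne.symm h) hx hy]
  | add y z hy hz => rw [map_add, add_sub_add_comm, map_add, inner_add_right, hy, hz, add_zero]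

theorem TwistStable.norm_sq_eq_add_norm_sq_sub_proj (hO : s.TwistStable O) (ε : E) (x : R) :
    ‖minkowskiMap O x‖ ^ 2 =
      ‖minkowskiMap O (s.proj ε x)‖ ^ 2 + ‖minkowskiMap O (x - s.proj ε x)‖ ^ 2 := by
  have h := hO.inner_sub_proj_eq_zero (s.proj_mem ε x) x
  simpa only [← map_add, add_sub_cancel, ← sq] using
    norm_add_sq_eq_norm_sq_add_norm_sq_of_inner_eq_zero _ _ h

theorem TwistStable.sum_norm_sq_minkowskiMap_proj_le (hO : s.TwistStable O) (t : Finset E) (x : R) :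
    ∑ ε ∈ t, ‖minkowskiMap O (s.proj ε x)‖ ^ 2 ≤ ‖minkowskiMap O x‖ ^ 2 := by
  classical
  induction t using Finset.induction_on generalizing x with
  | empty => simp
  | insert ε t hε ih =>
    rw [Finset.sum_insert hε, hO.norm_sq_eq_add_norm_sq_sub_proj ε x]
    have hproj : ∀ δ ∈ t, s.proj δ x = s.proj δ (x - s.proj ε x) := fun δ hδ => by
      rw [map_sub, s.proj_of_mem_ne (s.proj_mem ε x) (ne_of_mem_of_not_mem hδ hε).symm, sub_zero]
    rw [Finset.sum_congr rfl fun δ hδ => by rw [hproj δ hδ]]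
    gcongr
    exact ih _

theorem sum_norm_sq_proj_le [Finite (R →+* ℂ)] {x : R} {B : ℝ} (hx : ∀ τ : R →+* ℂ, ‖τ x‖ ≤ B)
    (σ : R →+* ℂ) (t : Finset E) : ∑ ε ∈ t, ‖σ (s.proj ε x)‖ ^ 2 ≤ B ^ 2 := by
  have hpos : (0 : ℝ) < (s.twistOrbit σ).card := by
    exact_mod_cast Finset.card_pos.2 ⟨σ, s.mem_twistOrbit.2 ⟨1, s.twist_one σ⟩⟩
  refine le_of_mul_le_mul_left ?_ hpos
  calc (s.twistOrbit σ).card * ∑ ε ∈ t, ‖σ (s.proj ε x)‖ ^ 2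
      = ∑ ε ∈ t, ‖minkowskiMap (s.twistOrbit σ) (s.proj ε x)‖ ^ 2 := by
        rw [Finset.mul_sum]
        exact Finset.sum_congr rfl fun ε _ =>
          (s.norm_sq_minkowskiMap_twistOrbit σ (s.proj_mem ε x)).symm
    _ ≤ ‖minkowskiMap (s.twistOrbit σ) x‖ ^ 2 :=
        (s.twistStable_twistOrbit σ).sum_norm_sq_minkowskiMap_proj_le t x
    _ ≤ (s.twistOrbit σ).card * B ^ 2 := by
        rw [norm_sq_minkowskiMap, ← nsmul_eq_mul]
        exact Finset.sum_le_card_nsmul _ _ _ fun τ _ => by gcongr; exact hx τ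

end Orthogonality

end Grading

section CommonRefinement

variable {R E F : Type*} [CommRing R] [Module.Finite ℤ R] [Module.IsTorsionFree ℤ R] [IsReduced R]
  [CommGroup E] [CommGroup F]

theorem minkowskiMap_univ_eq_zero [Fintype (R →+* ℂ)] {x : R}
    (hx : minkowskiMap Finset.univ x = 0) : x = 0 := by
  by_contra h
  obtain ⟨σ, hσ⟩ := exists_ringHom_complex_ne_zero h
  exact hσ (congrFun (congrArg WithLp.ofLp hx) ⟨σ, Finset.mem_univ σ⟩)

theorem finite_setOf_norm_minkowskiMap_univ_le [Fintype (R →+* ℂ)] (B : ℝ) :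
    {x : R | ‖minkowskiMap Finset.univ x‖ ≤ B}.Finite := by
  refine (finite_setOf_norm_le B).subset fun x hx σ => ?_
  exact (PiLp.norm_apply_le (minkowskiMap Finset.univ x) ⟨σ, Finset.mem_univ σ⟩).trans hx

namespace Grading

theorem exists_add_eq_of_forall_notMem [Fintype (R →+* ℂ)] (s : Grading R E) {x : R}
    (hx : ∀ ε, x ∉ s.comp ε) :
    ∃ y z, y + z = x ∧ ‖minkowskiMap Finset.univ y‖ < ‖minkowskiMap Finset.univ x‖ ∧
      ‖minkowskiMap Finset.univ z‖ < ‖minkowskiMap Finset.univ x‖ := by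
  obtain ⟨ε, hε⟩ := s.exists_proj_ne_zero fun h : x = 0 => hx 1 (h ▸ zero_mem _)
  have hsub : x - s.proj ε x ≠ 0 := fun h => hx ε (sub_eq_zero.1 h ▸ s.proj_mem ε x)
  have hpyth := TwistStable.norm_sq_eq_add_norm_sq_sub_proj (s := s) (O := Finset.univ)
    (fun _ _ _ => Finset.mem_univ _) ε x
  have hproj_pos := norm_pos_iff.2 (mt minkowskiMap_univ_eq_zero hε)
  have hsub_pos := norm_pos_iff.2 (mt minkowskiMap_univ_eq_zero hsub)
  refine ⟨s.proj ε x, x - s.proj ε x, add_sub_cancel _ _, ?_, ?_⟩ <;>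
    refine lt_of_pow_lt_pow_left₀ 2 (norm_nonneg _) ?_ <;> nlinarith

/-- Following Eichler: an element that is not bihomogeneous is a sum of two shorter elements. -/
theorem closure_bihomogeneous (s : Grading R E) (t : Grading R F) :
    AddSubgroup.closure {x | (∃ ε, x ∈ s.comp ε) ∧ ∃ φ, x ∈ t.comp φ} = ⊤ := by
  have := Fintype.ofFinite (R →+* ℂ)
  let N (x : R) : ℝ := ‖minkowskiMap Finset.univ x‖
  refine (AddSubgroup.eq_top_iff' _).2 fun x => ?_
  induction hn : {y | N y ≤ N x}.ncard using Nat.strong_induction_on generalizing x with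
  | _ n ih =>
    have hshorter {y : R} (hy : N y < N x) :
        y ∈ AddSubgroup.closure {x | (∃ ε, x ∈ s.comp ε) ∧ ∃ φ, x ∈ t.comp φ} := by
      refine ih _ (hn ▸ Set.ncard_lt_ncard ?_ (finite_setOf_norm_minkowskiMap_univ_le _)) y rfl
      exact ⟨fun z hz => hz.trans hy.le, fun h => (h (le_refl (N x))).not_gt hy⟩
    by_cases hs : ∃ ε, x ∈ s.comp ε
    · by_cases ht : ∃ φ, x ∈ t.comp φ
      · exact AddSubgroup.subset_closure ⟨hs, ht⟩
      · obtain ⟨y, z, rfl, hy, hz⟩ := t.exists_add_eq_of_forall_notMem (not_exists.1 ht)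
        exact add_mem (hshorter hy) (hshorter hz)
    · obtain ⟨y, z, rfl, hy, hz⟩ := s.exists_add_eq_of_forall_notMem (not_exists.1 hs)
      exact add_mem (hshorter hy) (hshorter hz)

theorem proj_comm (s : Grading R E) (t : Grading R F) (ε : E) (φ : F) (x : R) :
    s.proj ε (t.proj φ x) = t.proj φ (s.proj ε x) := by
  classical
  have hx := s.closure_bihomogeneous t ▸ AddSubgroup.mem_top x
  induction hx using AddSubgroup.closure_induction with
  | mem x h =>
    obtain ⟨⟨ε', hε'⟩, φ', hφ'⟩ := h
    have hs : s.proj ε x = if ε' = ε then x else 0 := by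
      split_ifs with h
      exacts [s.proj_of_mem (h ▸ hε'), s.proj_of_mem_ne hε' h]
    have ht : t.proj φ x = if φ' = φ then x else 0 := by
      split_ifs with h
      exacts [t.proj_of_mem (h ▸ hφ'), t.proj_of_mem_ne hφ' h]
    rw [hs, ht, apply_ite (s.proj ε), apply_ite (t.proj φ), hs, ht]
    split_ifs <;> simp
  | zero => simp
  | add x y _ _ hx hy => simp only [map_add, hx, hy]
  | neg x _ hx => simp only [map_neg, hx]

end Grading

end CommonRefinement

section GroupRing

variable {A G E : Type*} [CommRing A] [CommGroup G] [Finite G] [CommGroup E]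

open MonoidAlgebra

instance isReduced_monoidAlgebra [IsReduced A] [Module.IsTorsionFree ℤ A] [Algebra.IsIntegral ℤ A] :
    IsReduced (MonoidAlgebra A G) := by
  refine ⟨fun x hx => ?_⟩
  by_contra hx0
  obtain ⟨g, hg⟩ : ∃ g, x.coeff g ≠ 0 := by
    by_contra! h
    exact hx0 (by ext g; exact h g)
  obtain ⟨σ, hσ⟩ := exists_ringHom_complex_ne_zero hg
  have hmap : mapRingHom G σ x = 0 := (hx.map (mapRingHom G σ)).eq_zero
  exact hσ (by simpa using congrArg (fun y : MonoidAlgebra ℂ G => y.coeff g) hmap)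

theorem norm_map_single_one (τ : MonoidAlgebra A G →+* ℂ) (g : G) :
    ‖τ (single g 1)‖ = 1 :=
  ((τ : _ →* ℂ).comp (MonoidAlgebra.of A G)).isOfFinOrder (isOfFinOrder_of_finite g) |>.norm_eq_one

namespace Grading

variable [Module.Finite ℤ A] [Module.IsTorsionFree ℤ A] [IsReduced A]
  (s : Grading (MonoidAlgebra A G) E)

theorem exists_proj_single_eq_single (ε : E) (g : G) (a : A) :
    ∃ b, s.proj ε (single g a) = single g b := by
  let t := (ofUnit A).groupRing G
  have ha : single g a ∈ t.comp ((), g) := ⟨a, AddSubgroup.mem_top a, rfl⟩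
  obtain ⟨b, -, hb⟩ : s.proj ε (single g a) ∈ t.comp ((), g) := by
    rw [← t.proj_of_mem ha, s.proj_comm t]
    exact t.proj_mem _ _
  exact ⟨b, hb.symm⟩

theorem exists_proj_single_one_eq_single (hA : IsConnectedRing A) (ε : E) (g : G) :
    ∃ a, s.proj ε (single g 1) = single g a ∧ (a = 0 ∨ IsOfFinOrder a) := by
  obtain ⟨a, ha⟩ := s.exists_proj_single_eq_single ε g 1
  refine ⟨a, ha, hA.eq_zero_or_isOfFinOrder_of_norm_le_one fun σ => ?_⟩
  let τ : MonoidAlgebra A G →+* ℂ := σ.comp (MonoidAlgebra.lift A A G 1).toRingHom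
  have hτ : τ (single g a) = σ a := by simp [τ]
  have h := sum_norm_sq_proj_le (s := s) (fun τ => (norm_map_single_one τ g).le) τ {ε}
  rw [Finset.sum_singleton, ha, hτ] at h
  exact le_of_sq_le_sq h zero_le_one

theorem exists_single_one_mem (hA : IsConnectedRing A) (g : G) :
    ∃ ε, (single g 1 : MonoidAlgebra A G) ∈ s.comp ε := by
  have := hA.1
  have hg : (single g 1 : MonoidAlgebra A G) ≠ 0 := by simp
  obtain ⟨σ, -⟩ := exists_ringHom_complex_ne_zero hg
  have hnorm {δ : E} (hδ : s.proj δ (single g 1) ≠ 0) : ‖σ (s.proj δ (single g 1))‖ = 1 := by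
    obtain ⟨a, ha, rfl | hfin⟩ := s.exists_proj_single_one_eq_single hA δ g
    · simp [ha] at hδ
    · have hmul : (single g a : MonoidAlgebra A G) = singleOneRingHom a * single g 1 := by simp
      rw [ha, hmul, map_mul, norm_mul, norm_map_single_one, mul_one]
      exact ((σ.comp singleOneRingHom : A →+* ℂ) : A →* ℂ).isOfFinOrder hfin |>.norm_eq_one
  obtain ⟨ε, hε⟩ := s.exists_proj_ne_zero hg
  refine ⟨ε, s.mem_of_forall_proj_mem fun δ => ?_⟩
  rcases eq_or_ne δ ε with rfl | hne
  · exact s.proj_mem _ _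
  by_cases hδ : s.proj δ (single g 1) = 0
  · exact hδ ▸ zero_mem _
  · classical
    have h := sum_norm_sq_proj_le (s := s) (fun τ => (norm_map_single_one τ g).le) σ {δ, ε}
    rw [Finset.sum_pair hne, hnorm hδ, hnorm hε] at h
    norm_num at h

theorem exists_degreeHom (hA : IsConnectedRing A) :
    ∃ φ : G →* E, ∀ g, (single g 1 : MonoidAlgebra A G) ∈ s.comp (φ g) := by
  have := hA.1
  choose φ hφ using s.exists_single_one_mem hA
  refine ⟨.mk' φ fun g h => s.degree_unique (hφ _) ?_ (by simp), hφ⟩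
  simpa [single_mul_single] using s.mul_mem (hφ g) (hφ h)

end Grading

end GroupRing

theorem countable_subgroupClosure {E : Type*} [Group E] {S : Set E} (hS : S.Countable) :
    Countable (Subgroup.closure S) := by
  have := hS.to_subtype
  rw [FreeGroup.closure_eq_range]
  exact (Set.countable_range _).to_subtype

namespace Grading

section Universality

variable {A : Type u} [CommRing A]

theorem exists_mem_ne_zero_of_mem_support {E : Type*} [CommGroup E] {s : Grading A E} {ε : E}
    (hε : ε ∈ s.support) : ∃ x ∈ s.comp ε, x ≠ 0 := by
  obtain ⟨x, hx⟩ := AddSubgroup.ne_bot_iff_exists_ne_zero.1 hε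
  exact ⟨x, x.2, by simpa using hx⟩

theorem countable_support [Countable A] {E : Type*} [CommGroup E] (s : Grading A E) :
    s.support.Countable := by
  choose x hx hx0 using fun ε : s.support => exists_mem_ne_zero_of_mem_support ε.2
  exact Function.Injective.countable (f := x) fun ε δ h =>
    Subtype.ext (s.degree_unique (hx ε) (h ▸ hx δ) (hx0 ε))

namespace IsUniversal

variable {Γ : Type v} [CommGroup Γ] {gr : Grading A Γ}

theorem closure_support_eq_top (hgr : gr.IsUniversal) : Subgroup.closure gr.support = ⊤ := by
  let H := Subgroup.closure gr.support
  obtain ⟨f, hf, -⟩ := isUniversal_iff.1 hgr H _ <|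
    gr.reindex H.subtype H.subtype_injective fun γ hγ =>
      ⟨⟨γ, Subgroup.subset_closure hγ⟩, rfl⟩
  have hid : H.subtype.comp f = .id Γ :=
    (isUniversal_iff.1 hgr Γ _ gr).unique hf fun _ => le_rfl
  exact (Subgroup.eq_top_iff' _).2 fun γ => by
    rw [← MonoidHom.id_apply Γ γ, ← hid]
    exact (f γ).2

theorem hom_ext (hgr : gr.IsUniversal) {E : Type w} [CommGroup E] (t : Grading A E)
    {f f' : Γ →* E} (hf : ∀ γ, gr.comp γ ≤ t.comp (f γ)) (hf' : ∀ γ, gr.comp γ ≤ t.comp (f' γ)) :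
    f = f' := by
  refine MonoidHom.eq_of_eqOn_dense hgr.closure_support_eq_top fun γ hγ => ?_
  obtain ⟨x, hx, hx0⟩ := exists_mem_ne_zero_of_mem_support hγ
  exact t.degree_unique (hf γ hx) (hf' γ hx) hx0

/-- Universality only concerns grading groups in one universe; for a countable ring the support
generates a countable group, which has a copy in every universe. -/
theorem exists_hom [Countable A] (hgr : gr.IsUniversal) {E : Type w} [CommGroup E]
    (t : Grading A E) : ∃ f : Γ →* E, ∀ γ, gr.comp γ ≤ t.comp (f γ) := by
  let H := Subgroup.closure t.support
  have : Countable H := countable_subgroupClosure t.countable_support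
  let e : Shrink.{v} H ≃* H := Shrink.mulEquiv
  let ι : Shrink.{v} H →* E := H.subtype.comp e.toMonoidHom
  have hι : t.support ⊆ Set.range ι := fun ε hε =>
    ⟨e.symm ⟨ε, Subgroup.subset_closure hε⟩, by simp [ι]⟩
  obtain ⟨f, hf, -⟩ := isUniversal_iff.1 hgr _ _ <|
    t.reindex ι (H.subtype_injective.comp e.injective) hι
  exact ⟨ι.comp f, hf⟩

theorem groupRing [Module.Finite ℤ A] [Module.IsTorsionFree ℤ A] [IsReduced A]
    (hgr : gr.IsUniversal) (hA : IsConnectedRing A) (G : Type w) [CommGroup G] [Finite G] :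
    (gr.groupRing G).IsUniversal := by
  have := hA.1
  have : Countable A := Finsupp.Countable.of_moduleFinite (R := ℤ)
  refine isUniversal_iff.2 fun E _ t => ?_
  obtain ⟨φ, hφ⟩ := t.exists_degreeHom hA
  let tA : Grading A E := t.comap MonoidAlgebra.singleOneRingHom
    (fun _ _ => MonoidAlgebra.single_right_inj.1) fun ε a =>
      (t.exists_proj_single_eq_single ε 1 a).imp fun _ => Eq.symm
  obtain ⟨f, hf⟩ := hgr.exists_hom tA
  refine ⟨f.coprod φ, ?_, fun ψ hψ => ?_⟩
  · rintro ⟨γ, g⟩ _ ⟨a, ha, rfl⟩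
    simpa [MonoidAlgebra.single_mul_single] using t.mul_mem (hf γ ha) (hφ g)
  · have hψ_inl : ψ.comp (.inl Γ G) = f :=
      hgr.hom_ext tA (fun γ a ha => hψ (γ, 1) ⟨a, ha, rfl⟩) hf
    have hψ_inr : ψ.comp (.inr Γ G) = φ := MonoidHom.ext fun g =>
      t.degree_unique (hψ (1, g) ⟨1, gr.one_mem, rfl⟩) (hφ g) (by simp)
    rw [← hψ_inl, ← hψ_inr, MonoidHom.coprod_unique]

end IsUniversal

end Universality

end Grading

/-- Let `A` be a connected reduced order with universal grading
`(Γ, (A_γ))` and degree map `d : μ(A) → Γ`, and let `G` be a finite abelian group. Then the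
family `(A_γ·g)_{(γ,g) ∈ Γ × G}` is a universal grading of `A[G]`, and, identifying
`μ(A[G])` with `μ(A) × G` via `(ζ,g) ↦ ζ·g`, the degree map of `A[G]` is `d × id_G`
(i.e. the root of unity `ζ·g` lies in the component of degree `(d ζ, g)`). -/
theorem universal_grading_of_groupring
    {A : Type u} [CommRing A] [Module.Free ℤ A] [Module.Finite ℤ A] [IsReduced A]
    (hconn : IsConnectedRing A)
    {Γ : Type v} [CommGroup Γ] (gr : Grading A Γ) (hgr : gr.IsUniversal)
    (d : CommGroup.torsion Aˣ →* Γ)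
    (hd : ∀ ζ : CommGroup.torsion Aˣ, ((ζ : Aˣ) : A) ∈ gr.comp (d ζ))
    (G : Type w) [CommGroup G] [Finite G] :
    ∃ gr' : Grading (MonoidAlgebra A G) (Γ × G),
      (∀ (γ : Γ) (g : G),
        gr'.comp (γ, g) = (gr.comp γ).map (MonoidAlgebra.singleAddHom g)) ∧
      gr'.IsUniversal ∧
      ∀ (ζ : CommGroup.torsion Aˣ) (g : G),
        (MonoidAlgebra.single g ((ζ : Aˣ) : A) : MonoidAlgebra A G) ∈ gr'.comp (d ζ, g) :=
  ⟨gr.groupRing G, fun _ _ => rfl, hgr.groupRing hconn G, fun ζ _ => ⟨_, hd ζ, rfl⟩⟩
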